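/- Let n and r be positive integers and let G be a finite simple graph on n vertices with clique number at most r. Then for every k with 2 ≤ k ≤ r, c_k(G) · t_{k-1}(n,r) ≤ c_{k-1}(G) · t_k(n,r); moreover c_2(G) ≤ t_2(n,r). Equivalently, the ratios c_k(G)/t_k(n,r) form a weakly decreasing sequence in k, bounded above by 1 from k = 2 on. -/

import Mathlib

/-- The number of `k`-cliques of a graph `G`. -/
noncomputable def cliqueCount {V : Type*} (G : SimpleGraph V) (k : ℕ) : ℕ :=
  {s : Finset V | G.IsNClique k s}.ncard

/-- `t_k(n,r)`: the number of `k`-cliques of the Turán graph `T(n,r)`. -/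
noncomputable def turanCount (n r k : ℕ) : ℕ :=
  cliqueCount (SimpleGraph.turanGraph n r) k

theorem CR.esymm_cons (x : ℕ) (m : Multiset ℕ) (k : ℕ) :
    (x ::ₘ m).esymm (k+1) = m.esymm (k+1) + x * m.esymm k := by
  simp [Multiset.esymm, Multiset.powersetCard_cons, Multiset.map_map, Function.comp_def,
    Multiset.sum_map_mul_left]

theorem CR.esymm_zero (m : Multiset ℕ) : m.esymm 0 = 1 := by
  simp [Multiset.esymm]

theorem CR.logconc (m : Multiset ℕ) : ∀ i j, i ≤ j →
    m.esymm i * m.esymm (j+2) ≤ m.esymm (i+1) * m.esymm (j+1) := by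
  induction m using Multiset.induction with
  | empty =>
    intro i j h
    simp [Multiset.esymm, Multiset.powersetCard_zero_right]
  | cons x m ih =>
    intro i j h
    rcases i with _ | i
    · have h0 := ih 0 j h
      rw [CR.esymm_zero] at h0 ⊢
      simp only [CR.esymm_cons, CR.esymm_zero] at h0 ⊢
      nlinarith [Nat.zero_le (x * m.esymm 1 * m.esymm j), Nat.zero_le (x * x * m.esymm j)]
    · obtain ⟨j, rfl⟩ : ∃ j', j = j' + 1 := ⟨j - 1, by omega⟩
      have h1 := ih (i+1) (j+1) h
      have h2 := ih i j (by omega)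
      have h3 : m.esymm i * m.esymm (j+3) ≤ m.esymm (i+2) * m.esymm (j+1) := by
        have h4 := ih i (j+1) (by omega)
        rcases Nat.lt_or_ge i j with hij | hij
        · exact h4.trans (ih (i+1) j hij)
        · have : i = j := by omega
          subst this
          rw [mul_comm (m.esymm (i+2))]
          exact h4
      simp only [CR.esymm_cons]
      simp only [show i + 1 + 1 = i + 2 from rfl, show j + 1 + 1 = j + 2 from rfl,
        show j + 1 + 2 = j + 3 from rfl, show j + 2 + 1 = j + 3 from rfl] at *
      nlinarith [Nat.mul_le_mul_left x h3, Nat.mul_le_mul_left (x*x) h2]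

/-- The balanced multiset with sum `n` and cardinality `r`. -/
def CR.bal (n r : ℕ) : Multiset ℕ :=
  Multiset.replicate (r - n % r) (n / r) + Multiset.replicate (n % r) (n / r + 1)

theorem CR.eq_bal (m : Multiset ℕ) (hr : 0 < m.card) (h : ∀ x ∈ m, ∀ y ∈ m, x ≤ y + 1) :
    m = CR.bal m.sum m.card := by
  obtain ⟨q, hq, hmin⟩ : ∃ q ∈ m, ∀ y ∈ m, q ≤ y := by
    have hne : m.toFinset.Nonempty := by
      obtain ⟨a, ha⟩ := Multiset.card_pos_iff_exists_mem.1 hr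
      exact ⟨a, by simpa using ha⟩
    obtain ⟨q, hq, hm⟩ := Finset.exists_min_image m.toFinset id hne
    exact ⟨q, by simpa using hq, fun y hy => hm y (by simpa using hy)⟩
  have hm : m = Multiset.replicate (m.filter (· = q)).card q
      + Multiset.replicate (m.filter (fun x => ¬ x = q)).card (q+1) := by
    conv_lhs => rw [← Multiset.filter_add_not (· = q) m]
    congr 1
    · rw [Multiset.eq_replicate]; simp
    · rw [Multiset.eq_replicate]
      refine ⟨rfl, fun b hb => ?_⟩
      rw [Multiset.mem_filter] at hb
      have h1 := hmin b hb.1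
      have h2 := h b hb.1 q hq
      omega
  have ha : 0 < (m.filter (· = q)).card := by
    rw [Multiset.card_pos_iff_exists_mem]
    exact ⟨q, by simp [hq]⟩
  generalize (m.filter (· = q)).card = a at hm ha
  generalize (m.filter (fun x => ¬ x = q)).card = b at hm
  have hc : m.card = a + b := by rw [hm]; simp
  have hs : m.sum = b + (a + b) * q := by rw [hm]; simp; ring
  have hd : m.sum / m.card = q := by
    rw [hc, hs, Nat.add_mul_div_left _ _ (by omega), Nat.div_eq_of_lt (by omega)]; omega
  have hmod : m.sum % m.card = b := by
    rw [hc, hs, Nat.add_mul_mod_self_left, Nat.mod_eq_of_lt (by omega)]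
  rw [CR.bal, hd, hmod, hc, Nat.add_sub_cancel]
  exact hm

theorem CR.shift (P : Multiset ℕ) (x y k : ℕ) (hxy : y + 2 ≤ x) :
    (x ::ₘ y ::ₘ P).esymm (k+2) * ((x-1) ::ₘ (y+1) ::ₘ P).esymm (k+1) ≤
    (x ::ₘ y ::ₘ P).esymm (k+1) * ((x-1) ::ₘ (y+1) ::ₘ P).esymm (k+2) ∧
    (x ::ₘ y ::ₘ P).esymm (k+1) ≤ ((x-1) ::ₘ (y+1) ::ₘ P).esymm (k+1) := by
  obtain ⟨d, rfl⟩ : ∃ d, x = y + 2 + d := ⟨x - (y+2), by omega⟩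
  rw [show y + 2 + d - 1 = y + 1 + d by omega]
  rcases k with _ | k
  · simp only [CR.esymm_cons, CR.esymm_zero]
    generalize P.esymm 1 = p1
    generalize P.esymm (0+1+1) = p2
    constructor
    · have : 0 ≤ (d+1) * (2*y+2+d + p1) := Nat.zero_le _
      nlinarith
    · nlinarith
  · have h1 := CR.logconc P k k le_rfl
    have h2 := CR.logconc P k (k+1) (by omega)
    simp only [CR.esymm_cons]
    simp only [show k + 1 + 1 = k + 2 from rfl, show k + 1 + 2 = k + 3 from rfl,
      show k + 2 + 1 = k + 3 from rfl] at *
    generalize P.esymm k = p0 at *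
    generalize P.esymm (k+1) = p1 at *
    generalize P.esymm (k+2) = p2 at *
    generalize P.esymm (k+3) = p3 at *
    constructor
    · have := Nat.mul_le_mul_left ((d+1)*(2*y+2+d)) h1
      have := Nat.mul_le_mul_left (d+1) h2
      nlinarith
    · nlinarith

theorem CR.esymm_ratio (N : ℕ) : ∀ (m : Multiset ℕ) (k : ℕ), (m.map (fun x => x^2)).sum ≤ N →
    0 < m.card → m.esymm (k+2) * (CR.bal m.sum m.card).esymm (k+1) ≤
      m.esymm (k+1) * (CR.bal m.sum m.card).esymm (k+2) := by
  induction N using Nat.strong_induction_on with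
  | _ N ih =>
  intro m k hN hr
  by_cases hb : ∀ x ∈ m, ∀ y ∈ m, x ≤ y + 1
  · rw [← CR.eq_bal m hr hb, mul_comm]
  · push Not at hb
    obtain ⟨x, hx, y, hy, hxy⟩ := hb
    obtain ⟨Q, rfl⟩ := Multiset.exists_cons_of_mem hx
    have hy' : y ∈ Q := by
      rcases Multiset.mem_cons.1 hy with h | h
      · omega
      · exact h
    obtain ⟨P, rfl⟩ := Multiset.exists_cons_of_mem hy'
    obtain ⟨h1, h2⟩ := CR.shift P x y k hxy
    have hlt : (((x-1) ::ₘ (y+1) ::ₘ P).map (fun x => x^2)).sum < N := by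
      refine lt_of_lt_of_le ?_ hN
      simp only [Multiset.map_cons, Multiset.sum_cons]
      obtain ⟨d, rfl⟩ : ∃ d, x = y + 2 + d := ⟨x - (y+2), by omega⟩
      rw [show y + 2 + d - 1 = y + 1 + d by omega]
      nlinarith
    have h3 := ih _ hlt _ k le_rfl (by simp)
    have hs : ((x-1) ::ₘ (y+1) ::ₘ P).sum = (x ::ₘ y ::ₘ P).sum := by
      simp only [Multiset.sum_cons]; omega
    have hc : ((x-1) ::ₘ (y+1) ::ₘ P).card = (x ::ₘ y ::ₘ P).card := by simp
    rw [hs, hc] at h3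
    have h4 := CR.logconc (x ::ₘ y ::ₘ P) 0 k (Nat.zero_le _)
    rw [CR.esymm_zero, one_mul] at h4
    generalize (CR.bal (x ::ₘ y ::ₘ P).sum (x ::ₘ y ::ₘ P).card) = T at *
    generalize (x ::ₘ y ::ₘ P) = m at *
    generalize ((x-1) ::ₘ (y+1) ::ₘ P) = m' at *
    rcases Nat.eq_zero_or_pos (m'.esymm (k+1)) with h0 | h0
    · have : m.esymm (k+1) = 0 := by omega
      rw [this, mul_zero] at h4
      have : m.esymm (k+2) = 0 := by omega
      simp [this]
    · refine Nat.le_of_mul_le_mul_left ?_ h0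
      calc _ = (m.esymm (k+2) * m'.esymm (k+1)) * T.esymm (k+1) := by ring
        _ ≤ (m.esymm (k+1) * m'.esymm (k+2)) * T.esymm (k+1) := Nat.mul_le_mul_right _ h1
        _ = m.esymm (k+1) * (m'.esymm (k+2) * T.esymm (k+1)) := by ring
        _ ≤ m.esymm (k+1) * (m'.esymm (k+1) * T.esymm (k+2)) := Nat.mul_le_mul_left _ h3
        _ = _ := by ring
theorem CR.cliqueCount_col {n r : ℕ} (G : SimpleGraph (Fin n)) (col : Fin n → Fin r)
    (h : ∀ u v, G.Adj u v ↔ col u ≠ col v) (k : ℕ) :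
    cliqueCount G k = ((Finset.univ : Finset (Fin r)).val.map
      (fun j => (Finset.univ.filter (fun v => col v = j)).card)).esymm k := by
  classical
  rw [Finset.esymm_map_val, cliqueCount]
  have h1 : {s : Finset (Fin n) | G.IsNClique k s} =
      ((Finset.univ.filter (fun s => G.IsNClique k s) : Finset (Finset (Fin n))) : Set _) := by
    ext; simp
  have hinj : ∀ s, G.IsNClique k s → Set.InjOn col s := by
    intro s hs a ha b hb hab
    by_contra hne
    exact (h a b).1 (hs.1 ha hb hne) hab
  rw [h1, Set.ncard_coe_finset, Finset.card_eq_sum_card_fiberwise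
    (f := fun s => s.image col) (t := Finset.powersetCard k Finset.univ)]
  · refine Finset.sum_congr rfl fun S hS => ?_
    rw [Finset.mem_powersetCard] at hS
    rw [← Finset.card_pi]
    symm
    refine Finset.card_bij (fun f _ => S.attach.image (fun j => f j.1 j.2)) ?_ ?_ ?_
    · intro f hf
      rw [Finset.mem_pi] at hf
      have hf' : ∀ j (hj : j ∈ S), col (f j hj) = j := fun j hj => by simpa using hf j hj
      simp only [Finset.mem_filter, Finset.mem_univ, true_and]
      refine ⟨⟨?_, ?_⟩, ?_⟩
      · intro a ha b hb hne
        simp only [Finset.coe_image, Set.mem_image, Finset.mem_coe, Finset.mem_attach, true_and,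
          Subtype.exists] at ha hb
        obtain ⟨i, hi, rfl⟩ := ha
        obtain ⟨j, hj, rfl⟩ := hb
        rw [h, hf', hf']
        rintro rfl
        exact hne rfl
      · rw [Finset.card_image_of_injective, Finset.card_attach, hS.2]
        rintro ⟨i, hi⟩ ⟨j, hj⟩ hij
        have := congrArg col hij
        simp only [hf'] at this
        exact Subtype.ext this
      · ext j
        simp only [Finset.mem_image, Finset.mem_attach, true_and, Subtype.exists]
        constructor
        · rintro ⟨a, ⟨i, hi, rfl⟩, rfl⟩
          rw [hf']; exact hi
        · intro hj
          exact ⟨_, ⟨j, hj, rfl⟩, hf' j hj⟩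
    · intro f hf g hg hfg
      rw [Finset.mem_pi] at hf hg
      have hf' : ∀ j (hj : j ∈ S), col (f j hj) = j := fun j hj => by simpa using hf j hj
      have hg' : ∀ j (hj : j ∈ S), col (g j hj) = j := fun j hj => by simpa using hg j hj
      funext j hj
      have : f j hj ∈ S.attach.image (fun j => g j.1 j.2) := by
        rw [← hfg]
        exact Finset.mem_image.2 ⟨⟨j, hj⟩, Finset.mem_attach _ _, rfl⟩
      obtain ⟨⟨i, hi⟩, -, hi2⟩ := Finset.mem_image.1 this
      have h3 := congrArg col hi2
      simp only [hf', hg'] at h3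
      subst h3
      exact hi2.symm
    · intro s hs
      simp only [Finset.mem_filter, Finset.mem_univ, true_and] at hs
      obtain ⟨hs, rfl⟩ := hs
      have hex : ∀ j ∈ s.image col, ∃ a ∈ s, col a = j := fun j hj => by simpa using hj
      choose f hf1 hf2 using hex
      refine ⟨f, ?_, ?_⟩
      · rw [Finset.mem_pi]
        intro j hj
        simp [hf2]
      · ext a
        simp only [Finset.mem_image, Finset.mem_attach, true_and, Subtype.exists]
        constructor
        · rintro ⟨j, hj, rfl⟩
          exact hf1 _ _
        · intro ha
          have hj := Finset.mem_image_of_mem col ha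
          exact ⟨col a, Finset.mem_image.1 hj, hinj s hs (hf1 _ hj) ha (hf2 _ hj)⟩
  · intro s hs
    simp only [Finset.coe_filter, Finset.mem_univ, true_and, Set.mem_setOf_eq] at hs
    simp only [Finset.mem_coe, Finset.mem_powersetCard, Finset.subset_univ, true_and]
    rw [Finset.card_image_of_injOn (hinj s hs), hs.2]

theorem CR.col_sum {n r : ℕ} (col : Fin n → Fin r) :
    ((Finset.univ : Finset (Fin r)).val.map
      (fun j => (Finset.univ.filter (fun v => col v = j)).card)).sum = n := by
  have := Finset.card_eq_sum_card_fiberwise (f := col) (s := Finset.univ) (t := Finset.univ)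
    (by intro x; simp)
  rw [Finset.card_univ, Fintype.card_fin] at this
  exact this.symm

theorem CR.turanCount_eq (n r k : ℕ) (hr : 0 < r) :
    turanCount n r k = (CR.bal n r).esymm k := by
  rw [turanCount, CR.cliqueCount_col _ (fun v => (⟨v % r, Nat.mod_lt _ hr⟩ : Fin r))
    (by intro u v; rw [SimpleGraph.turanGraph_adj]; simp)]
  have key := CR.eq_bal ((Finset.univ : Finset (Fin r)).val.map
      (fun j => (Finset.univ.filter
        (fun v : Fin n => (⟨v % r, Nat.mod_lt _ hr⟩ : Fin r) = j)).card)) (by simpa using hr) ?_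
  · rw [CR.col_sum] at key
    rw [key]; simp
  · have hval : ∀ j : Fin r, (Finset.univ.filter
        (fun v : Fin n => (⟨v % r, Nat.mod_lt _ hr⟩ : Fin r) = j)).card
        = n / r + if (j : ℕ) % r < n % r then 1 else 0 := by
      intro j
      rw [← Nat.count_modEq_card n hr, Nat.count_eq_card_filter_range]
      refine Finset.card_bij (fun v _ => v.1) ?_ ?_ ?_
      · intro v hv
        simpa [Fin.ext_iff, Nat.ModEq, Nat.mod_eq_of_lt j.2] using hv
      · intro a _ b _ hab
        exact Fin.ext hab
      · intro b hb
        simp only [Finset.mem_filter, Finset.mem_range] at hb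
        refine ⟨⟨b, hb.1⟩, ?_, rfl⟩
        simpa [Fin.ext_iff, Nat.ModEq, Nat.mod_eq_of_lt j.2] using hb.2
    intro x hx y hy
    obtain ⟨i, -, rfl⟩ := Multiset.mem_map.1 hx
    obtain ⟨j, -, rfl⟩ := Multiset.mem_map.1 hy
    rw [hval, hval]
    split_ifs <;> omega

theorem CR.multipartite {n r : ℕ} (hr : 0 < r) (G : SimpleGraph (Fin n)) (col : Fin n → Fin r)
    (h : ∀ u v, G.Adj u v ↔ col u ≠ col v) (k : ℕ) :
    cliqueCount G (k+2) * turanCount n r (k+1) ≤ cliqueCount G (k+1) * turanCount n r (k+2) := by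
  have := CR.esymm_ratio _ ((Finset.univ : Finset (Fin r)).val.map
      (fun j => (Finset.univ.filter (fun v => col v = j)).card)) k le_rfl (by simpa using hr)
  rw [CR.col_sum] at this
  rw [CR.turanCount_eq _ _ _ hr, CR.turanCount_eq _ _ _ hr, CR.cliqueCount_col G col h,
    CR.cliqueCount_col G col h]
  simpa using this
open Classical in
/-- The number of `k`-cliques containing `v`. -/
noncomputable def CR.cdeg {n : ℕ} (G : SimpleGraph (Fin n)) (k : ℕ) (v : Fin n) : ℕ :=
  (Finset.univ.filter (fun s : Finset (Fin n) => G.IsNClique k s ∧ v ∈ s)).card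

open Classical in
theorem CR.count_split {n : ℕ} (G : SimpleGraph (Fin n)) (k : ℕ) (v : Fin n) :
    cliqueCount G k = CR.cdeg G k v +
      (Finset.univ.filter (fun s : Finset (Fin n) => G.IsNClique k s ∧ v ∉ s)).card := by
  have h1 : {s : Finset (Fin n) | G.IsNClique k s} =
      ((Finset.univ.filter (fun s => G.IsNClique k s) : Finset (Finset (Fin n))) : Set _) := by
    ext; simp
  rw [cliqueCount, h1, Set.ncard_coe_finset, CR.cdeg,
    ← Finset.card_filter_add_card_filter_not (fun s => v ∈ s), Finset.filter_filter,
    Finset.filter_filter]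

theorem CR.cdeg_replace {n : ℕ} (G : SimpleGraph (Fin n)) (k : ℕ) (s t : Fin n)
    (hst : ¬ G.Adj s t) : CR.cdeg (G.replaceVertex s t) k t = CR.cdeg G k s := by
  classical
  rcases eq_or_ne s t with rfl | hne
  · simp
  have h1 : ∀ a b, a ≠ s → b ≠ s → (G.replaceVertex s t).Adj a b →
      G.Adj (Equiv.swap s t a) (Equiv.swap s t b) := by
    intro a b ha hb hab
    by_cases hat : a = t
    · subst hat
      have hba : b ≠ a := hab.ne'
      rw [Equiv.swap_apply_right, Equiv.swap_apply_of_ne_of_ne hb hba]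
      exact (G.adj_replaceVertex_iff_of_ne_right s hba).1 hab
    · by_cases hbt : b = t
      · subst hbt
        rw [Equiv.swap_apply_right, Equiv.swap_apply_of_ne_of_ne ha hat]
        exact ((G.adj_replaceVertex_iff_of_ne_right s hat).1 hab.symm).symm
      · rw [Equiv.swap_apply_of_ne_of_ne ha hat, Equiv.swap_apply_of_ne_of_ne hb hbt]
        exact (G.adj_replaceVertex_iff_of_ne s hat hbt).1 hab
  have h2 : ∀ a b, a ≠ t → b ≠ t → G.Adj a b →
      (G.replaceVertex s t).Adj (Equiv.swap s t a) (Equiv.swap s t b) := by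
    intro a b ha hb hab
    by_cases has : a = s
    · subst has
      have hba : b ≠ a := hab.ne'
      rw [Equiv.swap_apply_left, Equiv.swap_apply_of_ne_of_ne hba hb]
      exact (G.adj_replaceVertex_iff_of_ne_right a hb).2 hab
    · by_cases hbs : b = s
      · subst hbs
        rw [Equiv.swap_apply_left, Equiv.swap_apply_of_ne_of_ne has ha]
        exact ((G.adj_replaceVertex_iff_of_ne_right b ha).2 hab.symm).symm
      · rw [Equiv.swap_apply_of_ne_of_ne has ha, Equiv.swap_apply_of_ne_of_ne hbs hb]
        exact (G.adj_replaceVertex_iff_of_ne s ha hb).2 hab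
  have hinv : ∀ K : Finset (Fin n), (K.map (Equiv.swap s t).toEmbedding).map
      (Equiv.swap s t).toEmbedding = K := by
    intro K
    ext a; simp
  unfold CR.cdeg
  refine Finset.card_nbij' (fun K => K.map (Equiv.swap s t).toEmbedding)
    (fun K => K.map (Equiv.swap s t).toEmbedding) ?_ ?_ (fun K _ => hinv K) (fun K _ => hinv K)
  · intro K hK
    simp only [Finset.coe_filter, Finset.mem_univ, true_and, Set.mem_setOf_eq] at hK ⊢
    obtain ⟨hK, ht⟩ := hK
    have hs : ∀ a ∈ K, a ≠ s := by
      rintro a ha rfl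
      exact G.not_adj_replaceVertex_same a t (hK.1 ha ht hne)
    refine ⟨⟨?_, by rw [Finset.card_map, hK.2]⟩, ?_⟩
    · intro x hx y hy hxy
      simp only [Finset.coe_map, Set.mem_image, Finset.mem_coe] at hx hy
      obtain ⟨a, ha, rfl⟩ := hx
      obtain ⟨b, hb, rfl⟩ := hy
      exact h1 a b (hs a ha) (hs b hb) (hK.1 ha hb (fun h => hxy (by rw [h])))
    · exact Finset.mem_map.2 ⟨t, ht, by simp⟩
  · intro K hK
    simp only [Finset.coe_filter, Finset.mem_univ, true_and, Set.mem_setOf_eq] at hK ⊢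
    obtain ⟨hK, ht⟩ := hK
    have hs : ∀ a ∈ K, a ≠ t := by
      rintro a ha rfl
      exact hst (hK.1 ht ha hne)
    refine ⟨⟨?_, by rw [Finset.card_map, hK.2]⟩, ?_⟩
    · intro x hx y hy hxy
      simp only [Finset.coe_map, Set.mem_image, Finset.mem_coe] at hx hy
      obtain ⟨a, ha, rfl⟩ := hx
      obtain ⟨b, hb, rfl⟩ := hy
      exact h2 a b (hs a ha) (hs b hb) (hK.1 ha hb (fun h => hxy (by rw [h])))
    · exact Finset.mem_map.2 ⟨s, ht, by simp⟩

open Classical in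
theorem CR.count_replace {n : ℕ} (G : SimpleGraph (Fin n)) (k : ℕ) (s t : Fin n)
    (hst : ¬ G.Adj s t) :
    cliqueCount (G.replaceVertex s t) k + CR.cdeg G k t = cliqueCount G k + CR.cdeg G k s := by
  rw [CR.count_split _ k t, CR.count_split G k t, CR.cdeg_replace G k s t hst]
  have : (Finset.univ.filter (fun K : Finset (Fin n) =>
        (G.replaceVertex s t).IsNClique k K ∧ t ∉ K)) =
      (Finset.univ.filter (fun K : Finset (Fin n) => G.IsNClique k K ∧ t ∉ K)) := by
    ext K
    simp only [Finset.mem_filter, Finset.mem_univ, true_and]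
    refine and_congr_left fun ht => ?_
    have hK : ∀ a ∈ K, a ≠ t := by rintro a ha rfl; exact ht ha
    rw [SimpleGraph.isNClique_iff, SimpleGraph.isNClique_iff]
    refine and_congr_left fun _ => ?_
    constructor
    · intro h a ha b hb hab
      exact (G.adj_replaceVertex_iff_of_ne s (hK a ha) (hK b hb)).1 (h ha hb hab)
    · intro h a ha b hb hab
      exact (G.adj_replaceVertex_iff_of_ne s (hK a ha) (hK b hb)).2 (h ha hb hab)
  have aux : ∀ a b X Y : ℕ, X = Y → a + X + b = b + Y + a := by intro a b X Y h; omega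
  refine aux _ _ _ _ ?_
  convert congrArg Finset.card this

open Classical in
/-- Zykov symmetrisation for a linear functional of the clique counts. -/
theorem CR.zykov {n r : ℕ} (k l : ℕ) (α β : ℤ)
    (G : SimpleGraph (Fin n)) (hG : G.CliqueFree (r + 1)) :
    ∃ (H : SimpleGraph (Fin n)), H.CliqueFree (r+1) ∧
      (∀ t s u, ¬ H.Adj t s → ¬ H.Adj s u → ¬ H.Adj t u) ∧
      α * cliqueCount G k - β * cliqueCount G l ≤ α * cliqueCount H k - β * cliqueCount H l := by
  set f : SimpleGraph (Fin n) → ℤ :=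
    fun G => α * cliqueCount G k - β * cliqueCount G l with hf
  obtain ⟨M, hM, hMmax⟩ := Finset.exists_max_image
    (Finset.univ.filter (fun H : SimpleGraph (Fin n) => H.CliqueFree (r+1))) f
    ⟨G, by simpa using hG⟩
  obtain ⟨H, hH, hHmax⟩ := Finset.exists_max_image
    (Finset.univ.filter (fun H : SimpleGraph (Fin n) => H.CliqueFree (r+1) ∧ f M ≤ f H))
    (fun H => H.edgeFinset.card) ⟨M, by simpa using hM⟩
  simp only [Finset.mem_filter, Finset.mem_univ, true_and] at hM hMmax hH hHmax
  obtain ⟨hHc, hHM⟩ := hH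
  -- replacement keeps maximality
  have hrep : ∀ K : SimpleGraph (Fin n), K.CliqueFree (r+1) → f M ≤ f K → ∀ s t, ¬ K.Adj s t →
      f M ≤ f (K.replaceVertex s t) := by
    intro K hK hKM s t hst
    have hts : ¬ K.Adj t s := fun h => hst h.symm
    have a1 := hMmax _ (hK.replaceVertex t s)
    have b1 := CR.count_replace K k s t hst
    have b2 := CR.count_replace K l s t hst
    have b3 := CR.count_replace K k t s hts
    have b4 := CR.count_replace K l t s hts
    have e1 : (cliqueCount (K.replaceVertex s t) k : ℤ) =
      cliqueCount K k + CR.cdeg K k s - CR.cdeg K k t := by omega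
    have e2 : (cliqueCount (K.replaceVertex s t) l : ℤ) =
      cliqueCount K l + CR.cdeg K l s - CR.cdeg K l t := by omega
    have e3 : (cliqueCount (K.replaceVertex t s) k : ℤ) =
      cliqueCount K k + CR.cdeg K k t - CR.cdeg K k s := by omega
    have e4 : (cliqueCount (K.replaceVertex t s) l : ℤ) =
      cliqueCount K l + CR.cdeg K l t - CR.cdeg K l s := by omega
    simp only [hf] at a1 hKM ⊢
    rw [e3, e4] at a1
    rw [e1, e2]
    linarith
  have hdle : ∀ s t, ¬ H.Adj s t → H.degree s ≤ H.degree t := by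
    intro s t hst
    have := hHmax _ ⟨hHc.replaceVertex s t, hrep H hHc hHM s t hst⟩
    have h2 := H.card_edgeFinset_replaceVertex_of_not_adj hst
    have h3 : (H.replaceVertex s t).edgeFinset.card ≤ H.edgeFinset.card := by
      exact le_of_eq_of_le (by congr!) this
    omega
  refine ⟨H, hHc, ?_, (hMmax G hG).trans hHM⟩
  intro t s u hts hsu h
  have hst : ¬H.Adj s t := fun a ↦ hts a.symm
  have dst : H.degree s = H.degree t := le_antisymm (hdle _ _ hst) (hdle _ _ hts)
  have dsu : H.degree s = H.degree u :=
    le_antisymm (hdle _ _ hsu) (hdle _ _ (fun a => hsu a.symm))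
  have nst : s ≠ t := fun a ↦ hsu (a ▸ h)
  have ntu : t ≠ u := H.ne_of_adj h
  have hsu' := (H.adj_replaceVertex_iff_of_ne s nst ntu.symm).not.mpr hsu
  have hfin := hHmax _ ⟨(hHc.replaceVertex s t).replaceVertex s u,
    hrep _ (hHc.replaceVertex s t) (hrep H hHc hHM s t hst) s u hsu'⟩
  have hfin' : ((H.replaceVertex s t).replaceVertex s u).edgeFinset.card ≤ H.edgeFinset.card := by
    exact le_of_eq_of_le (by congr!) hfin
  rw [SimpleGraph.card_edgeFinset_replaceVertex_of_not_adj _ hsu',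
    SimpleGraph.card_edgeFinset_replaceVertex_of_not_adj _ hst, dst, Nat.add_sub_cancel] at hfin'
  have l1 : (H.replaceVertex s t).degree s = H.degree s := by
    unfold SimpleGraph.degree; congr 1; ext v
    simp_rw [SimpleGraph.mem_neighborFinset]
    by_cases eq : v = t
    · simpa only [eq, SimpleGraph.not_adj_replaceVertex_same, false_iff]
    · rw [H.adj_replaceVertex_iff_of_ne s nst eq]
  have l2 : (H.replaceVertex s t).degree u = H.degree u - 1 := by
    rw [SimpleGraph.degree, SimpleGraph.degree, ← Finset.card_singleton t,
      ← Finset.card_sdiff_of_subset (by simp [h.symm])]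
    congr 1; ext v
    simp_rw [SimpleGraph.mem_neighborFinset, Finset.mem_sdiff, Finset.mem_singleton,
      SimpleGraph.replaceVertex]
    split_ifs <;> simp_all [SimpleGraph.adj_comm]
  have l3 : 0 < H.degree u := by rw [H.degree_pos_iff_exists_adj u]; use t, h.symm
  omega

theorem CR.exists_col {n r : ℕ} (H : SimpleGraph (Fin n)) (hH : H.CliqueFree (r+1))
    (htr : ∀ t s u, ¬ H.Adj t s → ¬ H.Adj s u → ¬ H.Adj t u) :
    ∃ col : Fin n → Fin r, ∀ u v, H.Adj u v ↔ col u ≠ col v := by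
  classical
  let S : Setoid (Fin n) := ⟨fun a b => ¬ H.Adj a b, ⟨fun a => H.irrefl, fun h h' => h h'.symm,
    fun h1 h2 => htr _ _ _ h1 h2⟩⟩
  have hout : ∀ a b : Quotient S, a ≠ b → H.Adj a.out b.out := by
    intro a b hab
    by_contra h
    exact hab (Quotient.out_equiv_out.1 h)
  have hcard : Fintype.card (Quotient S) ≤ r := by
    by_contra hlt
    refine (hH.mono (n := Fintype.card (Quotient S)) (by omega))
      ((Finset.univ : Finset (Quotient S)).image Quotient.out) ⟨?_, ?_⟩
    · intro a ha b hb hab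
      simp only [Finset.coe_image, Finset.coe_univ, Set.image_univ, Set.mem_range] at ha hb
      obtain ⟨a, rfl⟩ := ha
      obtain ⟨b, rfl⟩ := hb
      exact hout a b (fun h => hab (by rw [h]))
    · rw [Finset.card_image_of_injective _ Quotient.out_injective, Finset.card_univ]
  obtain ⟨e⟩ : Nonempty (Quotient S ↪ Fin r) :=
    Function.Embedding.nonempty_of_card_le (by simpa using hcard)
  refine ⟨fun v => e (Quotient.mk S v), fun u v => ?_⟩
  rw [ne_eq, e.injective.eq_iff, Quotient.eq]
  exact (not_not (a := H.Adj u v)).symm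

theorem CR.main {n r : ℕ} (hr : 0 < r) (G : SimpleGraph (Fin n)) (hG : G.CliqueFree (r + 1))
    (k : ℕ) :
    cliqueCount G (k+2) * turanCount n r (k+1) ≤ cliqueCount G (k+1) * turanCount n r (k+2) := by
  obtain ⟨H, hH, htr, hle⟩ := CR.zykov (k+2) (k+1) (turanCount n r (k+1)) (turanCount n r (k+2))
    G hG
  obtain ⟨col, hcol⟩ := CR.exists_col H hH htr
  have h := CR.multipartite hr H col hcol k
  zify at h ⊢
  linarith

theorem CR.count_one {n : ℕ} (G : SimpleGraph (Fin n)) : cliqueCount G 1 = n := by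
  have : {s : Finset (Fin n) | G.IsNClique 1 s} = Set.range (fun a : Fin n => {a}) := by
    ext s
    simp only [Set.mem_setOf_eq, SimpleGraph.isNClique_one, Set.mem_range, eq_comm]
  rw [cliqueCount, this, Set.ncard_range_of_injective Finset.singleton_injective]
  simp

/-- For any graph `G` on `n` vertices with clique number at most `r` and every
`2 ≤ k ≤ r`, the cross-multiplied inequality `c_k(G) t_{k-1}(n,r) ≤ c_{k-1}(G) t_k(n,r)`
holds; moreover `c_2(G) ≤ t_2(n,r)`.  In other words, the ratios `c_k(G)/t_k(n,r)` are
weakly decreasing in `k` and bounded above by `1` from `k = 2` on. -/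
theorem cliqueCount_ratio_mono (n r : ℕ) (hn : 0 < n) (hr : 0 < r)
    (G : SimpleGraph (Fin n)) (hG : G.CliqueFree (r + 1)) :
    (∀ k, 2 ≤ k → k ≤ r →
        cliqueCount G k * turanCount n r (k - 1) ≤
          cliqueCount G (k - 1) * turanCount n r k) ∧
      cliqueCount G 2 ≤ turanCount n r 2 := by
  constructor
  · intro k hk _
    obtain ⟨k, rfl⟩ : ∃ j, k = j + 2 := ⟨k - 2, by omega⟩
    exact CR.main hr G hG k
  · have h := CR.main hr G hG 0
    simp only [zero_add, turanCount, CR.count_one] at h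
    rw [mul_comm] at h
    exact Nat.le_of_mul_le_mul_left h hn
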